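/- Let V be a finite set, G a finite simple graph on V with a nonempty edge set E, and Φ : V → ℝ. Define F : ℝ → ℝ by F(x) = ∫_{−∞}^x arctan(eᵘ) du, and define S : (V → ℝ) → ℝ by S(ρ) = Σ_{{j,k}∈E} [F(ρ_k − ρ_j) + F(ρ_j − ρ_k) − F(ρ_j + ρ_k) − F(−ρ_j − ρ_k) − π(ρ_j + ρ_k)] + Σ_{j∈V} Φ(j) ρ_j. Then for every ρ : V → ℝ, the second derivative of t ↦ S(ρ + t·w) at t = 0 in the all-ones direction w ≡ 1 equals −Σ_{{j,k}∈E} 4/cosh(ρ_j + ρ_k), which is strictly negative; in particular, S is not convex. -/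

import Mathlib

/-!
By the fundamental theorem of calculus `F' = arctan ∘ exp` (`hasDerivAt_Fint`). Along the line
`t ↦ ρ + t·𝟙` the differences `ρ_k - ρ_j` are constant while `s = ρ_j + ρ_k` moves with speed `2`,
so an edge contributes `-2 arctan(eˢ) + 2 arctan(e⁻ˢ) - 2π` to the first derivative. Since
`d/ds arctan(eˢ) = 1 / (2 cosh s)`, it contributes `-4 / cosh s` to the second derivative.
Every such term is negative and there is at least one edge. Convexity of `S` would make its
restriction to the line convex, hence its second derivative there nonnegative, a contradiction.
-/

open MeasureTheory

/-- `F(x) = ∫_{−∞}^x arctan(eᵘ) du` (equal to `Im Li₂(i eˣ)`). -/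
noncomputable def Fint (x : ℝ) : ℝ := ∫ u in Set.Iio x, Real.arctan (Real.exp u)

/-- The variational functional `S` for orthogonal circle patterns in the sphere. -/
noncomputable def circlePatternFunctional {V : Type*} [Fintype V] [DecidableEq V]
    (G : SimpleGraph V) [DecidableRel G.Adj] (Φ : V → ℝ) (ρ : V → ℝ) : ℝ :=
  (∑ e ∈ G.edgeFinset,
    Sym2.lift ⟨fun j k =>
      Fint (ρ k - ρ j) + Fint (ρ j - ρ k) - Fint (ρ j + ρ k) - Fint (-ρ j - ρ k)
        - Real.pi * (ρ j + ρ k),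
      fun j k => by ring_nf⟩ e)
  + ∑ j, Φ j * ρ j

theorem integrableOn_arctan_exp_Iic (a : ℝ) :
    IntegrableOn (fun u : ℝ => Real.arctan (Real.exp u)) (Set.Iic a) := by
  refine Integrable.mono' (integrableOn_exp_Iic a) ?_ ?_
  · exact (Real.continuous_arctan.comp Real.continuous_exp).aestronglyMeasurable
  · refine Filter.Eventually.of_forall fun u => ?_
    have h0 : 0 ≤ Real.arctan (Real.exp u) := Real.arctan_nonneg.2 (Real.exp_pos u).le
    rw [Real.norm_eq_abs, abs_of_nonneg h0]
    simpa [Real.tan_arctan] using Real.le_tan h0 (Real.arctan_lt_pi_div_two _)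

theorem hasDerivAt_Fint (x : ℝ) : HasDerivAt Fint (Real.arctan (Real.exp x)) x := by
  have hc : Continuous fun u : ℝ => Real.arctan (Real.exp u) :=
    Real.continuous_arctan.comp Real.continuous_exp
  have hF : Fint = fun y => Fint 0 + ∫ u in (0 : ℝ)..y, Real.arctan (Real.exp u) := by
    funext y
    rw [← intervalIntegral.integral_Iic_sub_Iic (integrableOn_arctan_exp_Iic 0)
      (integrableOn_arctan_exp_Iic y), integral_Iic_eq_integral_Iio,
      integral_Iic_eq_integral_Iio]
    simp only [Fint]
    ring
  rw [hF]
  exact (intervalIntegral.integral_hasDerivAt_right (hc.intervalIntegrable _ _)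
    (hc.stronglyMeasurableAtFilter _ _) hc.continuousAt).const_add _

theorem hasDerivAt_arctan_exp (x : ℝ) :
    HasDerivAt (fun u : ℝ => Real.arctan (Real.exp u)) (1 / (2 * Real.cosh x)) x := by
  refine (Real.hasDerivAt_exp x).arctan.congr_deriv ?_
  have h := Real.exp_pos x
  rw [Real.cosh_eq, Real.exp_neg]
  field_simp
  ring

/-- The sum `ρ_j + ρ_k` over the endpoints of the unordered pair `{j, k}`. -/
def pairSum {V : Type*} (ρ : V → ℝ) (e : Sym2 V) : ℝ :=
  Sym2.lift ⟨fun j k => ρ j + ρ k, fun _ _ => add_comm _ _⟩ e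

theorem hasDerivAt_functional_line {V : Type*} [Fintype V] [DecidableEq V]
    (G : SimpleGraph V) [DecidableRel G.Adj] (Φ : V → ℝ) (ρ : V → ℝ) (t : ℝ) :
    HasDerivAt (fun t : ℝ => circlePatternFunctional G Φ (ρ + t • (1 : V → ℝ)))
      ((∑ e ∈ G.edgeFinset,
        (-2 * Real.arctan (Real.exp (pairSum ρ e + 2 * t))
          + 2 * Real.arctan (Real.exp (-(pairSum ρ e + 2 * t))) - 2 * Real.pi)) + ∑ j, Φ j) t := by
  unfold circlePatternFunctional
  refine HasDerivAt.add (HasDerivAt.fun_sum fun e _ => ?_) (HasDerivAt.fun_sum fun j _ => ?_)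
  · induction e using Sym2.ind with
    | _ j k =>
      have hs : HasDerivAt (fun t : ℝ => ρ j + ρ k + 2 * t) 2 t := by
        simpa using ((hasDerivAt_id t).const_mul 2).const_add (ρ j + ρ k)
      have h1 := (hasDerivAt_Fint (ρ j + ρ k + 2 * t)).comp t hs
      have h2 := (hasDerivAt_Fint (-(ρ j + ρ k + 2 * t))).comp t hs.neg
      have h := (((h1.const_sub (Fint (ρ k - ρ j) + Fint (ρ j - ρ k))).sub h2).sub
        (hs.const_mul Real.pi))
      refine (h.congr_deriv ?_).congr_of_eventuallyEq (Filter.Eventually.of_forall fun u => ?_)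
      · simp only [pairSum, Sym2.lift_mk]
        ring
      · simp only [Sym2.lift_mk, Pi.add_apply, Pi.sub_apply, Pi.smul_apply, Pi.one_apply,
          smul_eq_mul, mul_one, Function.comp_apply]
        ring_nf
        simp only [Pi.neg_apply]
        ring_nf
  · simpa using ((hasDerivAt_id t).const_add (ρ j)).const_mul (Φ j)

theorem hasDerivAt_deriv_functional_line {V : Type*} [Fintype V] [DecidableEq V]
    (G : SimpleGraph V) [DecidableRel G.Adj] (Φ : V → ℝ) (ρ : V → ℝ) (t : ℝ) :
    HasDerivAt (deriv fun t : ℝ => circlePatternFunctional G Φ (ρ + t • (1 : V → ℝ)))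
      (∑ e ∈ G.edgeFinset, -(4 / Real.cosh (pairSum ρ e + 2 * t))) t := by
  rw [funext fun t => (hasDerivAt_functional_line G Φ ρ t).deriv]
  refine (HasDerivAt.fun_sum fun e _ => ?_).add_const _
  have hs : HasDerivAt (fun t : ℝ => pairSum ρ e + 2 * t) 2 t := by
    simpa using ((hasDerivAt_id t).const_mul 2).const_add (pairSum ρ e)
  have h1 := (hasDerivAt_arctan_exp (pairSum ρ e + 2 * t)).comp t hs
  have h2 := (hasDerivAt_arctan_exp (-(pairSum ρ e + 2 * t))).comp t hs.neg
  refine (((h1.const_mul (-2)).add (h2.const_mul 2)).sub_const (2 * Real.pi)).congr_deriv ?_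
  have := Real.cosh_pos (pairSum ρ e + 2 * t)
  rw [Real.cosh_neg]
  field_simp
  ring

/-- **The spherical circle pattern functional is not convex.**
If the edge set is nonempty, then for every `ρ` the second derivative of
`t ↦ S(ρ + t·𝟙)` at `t = 0` in the all-ones direction equals
`−∑_{{j,k} ∈ E} 4/cosh(ρ_j + ρ_k)`, which is strictly negative; in
particular, `S` is not convex. -/
theorem circlePatternFunctional_not_convex
    {V : Type*} [Fintype V] [DecidableEq V]
    (G : SimpleGraph V) [DecidableRel G.Adj] (Φ : V → ℝ)
    (hE : G.edgeFinset.Nonempty) (ρ : V → ℝ) :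
    deriv (deriv (fun t : ℝ => circlePatternFunctional G Φ (ρ + t • (1 : V → ℝ)))) 0 =
        -∑ e ∈ G.edgeFinset,
          Sym2.lift ⟨fun j k => 4 / Real.cosh (ρ j + ρ k),
            fun j k => by ring_nf⟩ e ∧
      (-∑ e ∈ G.edgeFinset,
          Sym2.lift ⟨fun j k => (4 : ℝ) / Real.cosh (ρ j + ρ k),
            fun j k => by ring_nf⟩ e) < 0 ∧
      ¬ ConvexOn ℝ Set.univ (circlePatternFunctional G Φ) := by
  have hsum : (-∑ e ∈ G.edgeFinset,
          Sym2.lift ⟨fun j k => (4 : ℝ) / Real.cosh (ρ j + ρ k),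
            fun j k => by ring_nf⟩ e) =
      ∑ e ∈ G.edgeFinset, -(4 / Real.cosh (pairSum ρ e + 2 * 0)) := by
    rw [← Finset.sum_neg_distrib]
    refine Finset.sum_congr rfl fun e _ => ?_
    induction e using Sym2.ind with
    | _ j k => simp [pairSum]
  have hderiv := (hasDerivAt_deriv_functional_line G Φ ρ 0).deriv
  have hneg : ∑ e ∈ G.edgeFinset, -(4 / Real.cosh (pairSum ρ e + 2 * 0)) < 0 :=
    Finset.sum_neg (fun e _ => neg_lt_zero.2 (div_pos (by norm_num) (Real.cosh_pos _))) hE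
  refine ⟨hderiv.trans hsum.symm, hsum.trans_lt hneg, fun hconv => ?_⟩
  have hline : ConvexOn ℝ Set.univ
      (fun t : ℝ => circlePatternFunctional G Φ (ρ + t • (1 : V → ℝ))) := by
    have h := hconv.comp_affineMap (AffineMap.lineMap ρ (ρ + 1))
    refine h.congr fun t _ => ?_
    simp [AffineMap.lineMap_apply, add_comm]
  have hmono := monotoneOn_univ.1
    (hline.monotoneOn_deriv fun t _ => (hasDerivAt_functional_line G Φ ρ t).differentiableAt)
  exact absurd (hmono.deriv_nonneg (x := 0)) (not_le.2 (hderiv.trans_lt hneg))
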